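/- Let Σ be a positive definite 2×2 matrix and f(x₁,x₂) = ax₁² + 2bx₁x₂ + cx₂² a nonzero quadratic form with matrix A = [[a,b],[b,c]] ≠ 0. If b² − ac < 0, then W_{f,Σ} has the same distribution as (1/4)·(Z₁² + (4·det(AΣ)/trace(AΣ)²)·Z₂²), where Z₁ and Z₂ are independent standard normal random variables. -/

import Mathlib

open MeasureTheory ProbabilityTheory Matrix MvPolynomial Real

noncomputable section

/-- The distribution of a vector of independent standard normal random variables. -/
def stdGaussian (ι : Type*) [Fintype ι] : Measure (ι → ℝ) :=
  Measure.pi fun _ => gaussianReal 0 1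

/-- `μ` is the distribution of a centered Gaussian random vector with covariance matrix `S`,
i.e. `μ` is the law of `A Z` for a vector `Z` of i.i.d. standard normals with `A Aᵀ = S`. -/
def IsCenteredGaussian {ι : Type*} [Fintype ι] (μ : Measure (ι → ℝ))
    (S : Matrix ι ι ℝ) : Prop :=
  ∃ A : Matrix ι ι ℝ, A * Aᵀ = S ∧ μ = (stdGaussian ι).map A.mulVec

/-- The gradient of a polynomial. -/
def polyGrad {ι : Type*} [Fintype ι] (f : MvPolynomial ι ℝ) (x : ι → ℝ) : ι → ℝ :=
  fun i => eval x (pderiv i f)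

/-- The Wald ratio `W_{f,S}(x) = f(x)² / (∇f(x)ᵀ S ∇f(x))`. -/
def waldRV {ι : Type*} [Fintype ι] (f : MvPolynomial ι ℝ) (S : Matrix ι ι ℝ)
    (x : ι → ℝ) : ℝ :=
  (eval x f) ^ 2 / (polyGrad f x ⬝ᵥ S.mulVec (polyGrad f x))

/-- The chi-square distribution with `k` degrees of freedom. -/
def chiSq (k : ℕ) : Measure ℝ :=
  (stdGaussian (Fin k)).map fun z => ∑ i, (z i) ^ 2

/-!
Write `Σ = B Bᵀ` and `M = Bᵀ A B`. Then `W` has the law of `(Z ⬝ M Z)² / (4 |M Z|²)` for a standard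
Gaussian `Z` in `ℝ² = ℂ`, and, up to a scalar that cancels, `M` acts as `ζ ↦ ζ + conj (κ ζ)` with
`‖κ‖² = 1 - 4 det M / (tr M)² < 1`. Let `κ = ρ c` with `ρ = ‖κ‖` and `‖c‖ = 1`. At `Z = r u` with
`‖u‖ = 1` the ratio is `r² / 4 * (1 - ρ² (1 - Re w) / 2)`, where `w = s (s + ρ) / (1 + ρ s)` and
`s = c u²`. The form `(x² + (1 - ρ²) y²) / 4` is the same function of `r` and `w`, but with
`w = u²`. Both expressions for `w` are finite Blaschke products in `u` vanishing at `0`, so by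
Löwner's lemma both are uniformly distributed when `u` is. Since the direction of `Z` is uniform and
independent of `‖Z‖`, the two laws agree.
-/

open AddCircle Metric
open scoped ComplexConjugate ENNReal

section UniformAngle

variable {T : ℝ} [Fact (0 < T)]

theorem measure_ext_of_integral_fourier {μ ν : Measure (AddCircle T)} [IsFiniteMeasure μ]
    [IsFiniteMeasure ν] (h : ∀ n : ℤ, ∫ x, fourier n x ∂μ = ∫ x, fourier n x ∂ν) : μ = ν := by
  let toC := BoundedContinuousFunction.toContinuousMapStarₐ ℂ (α := AddCircle T) (β := ℂ)
  have hsep : ((fourierSubalgebra.comap toC).map toC).SeparatesPoints := by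
    rintro x y hxy
    obtain ⟨_, ⟨f, hf, rfl⟩, hne⟩ := fourierSubalgebra_separatesPoints hxy
    exact ⟨_, ⟨f, ⟨BoundedContinuousFunction.mkOfCompact f, hf, rfl⟩, rfl⟩, hne⟩
  refine ext_of_forall_mem_subalgebra_integral_eq_of_polish hsep fun g hg => ?_
  suffices ∀ f ∈ Submodule.span ℂ (Set.range (fourier (T := T))), ∫ x, f x ∂μ = ∫ x, f x ∂ν from
    this (toC g) (fourierSubalgebra_coe (T := T) ▸ hg)
  intro f hf
  have hint (ρ : Measure (AddCircle T)) [IsFiniteMeasure ρ] (f : C(AddCircle T, ℂ)) :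
      Integrable f ρ := f.continuous.integrable_of_hasCompactSupport (.of_compactSpace f)
  induction hf using Submodule.span_induction with
  | mem f hf => obtain ⟨n, rfl⟩ := hf; exact h n
  | zero => simp
  | add f g _ _ hf hg =>
    simp only [ContinuousMap.add_apply]
    rw [integral_add (hint μ f) (hint μ g), integral_add (hint ν f) (hint ν g), hf, hg]
  | smul c f _ hf => simp only [ContinuousMap.smul_apply, integral_smul, hf]

theorem measure_ext_of_integral_toCircle_pow {μ ν : Measure (AddCircle T)} [IsFiniteMeasure μ]
    [IsFiniteMeasure ν]
    (h : ∀ n : ℕ, ∫ x, (toCircle x : ℂ) ^ n ∂μ = ∫ x, (toCircle x : ℂ) ^ n ∂ν) : μ = ν := by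
  have fourier_natCast (n : ℕ) (x : AddCircle T) : fourier n x = (toCircle x : ℂ) ^ n := by
    rw [fourier_apply, toCircle_zsmul, zpow_natCast, Circle.coe_pow]
  refine measure_ext_of_integral_fourier fun n => ?_
  obtain ⟨n, rfl | rfl⟩ := n.eq_nat_or_neg
  · simpa only [fourier_natCast] using h n
  · simpa only [fourier_neg, fourier_natCast, integral_conj] using congrArg conj (h n)

theorem integral_haarAddCircle_toCircle {E : Type*} [NormedAddCommGroup E] [NormedSpace ℝ E]
    (f : ℂ → E) :
    ∫ x : AddCircle T, f (toCircle x) ∂haarAddCircle = circleAverage f 0 1 := by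
  have hT : 0 < T := Fact.out
  have hcomp := intervalIntegral.integral_comp_mul_left (a := 0) (b := T)
    (fun θ => f (circleMap 0 1 θ)) (c := 2 * π / T) (by positivity)
  rw [mul_zero, div_mul_cancel₀ _ hT.ne'] at hcomp
  rw [integral_haarAddCircle, ← AddCircle.intervalIntegral_preimage T 0, circleAverage_def,
    zero_add]
  simp only [toCircle_apply_mk, Circle.coe_exp]
  simp only [circleMap_zero, Complex.ofReal_one, one_mul] at hcomp ⊢
  rw [hcomp, smul_smul]
  congr 1
  field_simp

theorem integral_comp_toCircle_pow_of_diffContOnCl {G : ℂ → ℂ}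
    (hG : DiffContOnCl ℂ G (ball 0 1)) (n : ℕ) :
    ∫ x : AddCircle T, G (toCircle x) ^ n ∂haarAddCircle = G 0 ^ n := by
  have hGn : DiffContOnCl ℂ (fun z => G z ^ n) (ball 0 |1|) := by
    rw [abs_one]
    exact (differentiable_pow n).comp_diffContOnCl hG
  rw [integral_haarAddCircle_toCircle fun z => G z ^ n, hGn.circleAverage]

-- Löwner's lemma: by the mean value property `G` and the identity have the same moments.
theorem measurePreserving_comp_toCircle_of_diffContOnCl {G : ℂ → ℂ}
    (hG : DiffContOnCl ℂ G (ball 0 1)) (hG1 : ∀ z, ‖z‖ = 1 → ‖G z‖ = 1) (hG0 : G 0 = 0) :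
    MeasurePreserving (fun x : AddCircle T => G (toCircle x)) haarAddCircle
      (haarAddCircle.map fun x : AddCircle T => (toCircle x : ℂ)) := by
  have hT : T ≠ 0 := (Fact.out : 0 < T).ne'
  have hcont : Continuous fun x : AddCircle T => G (toCircle x) :=
    hG.continuousOn_ball.comp_continuous (by fun_prop) fun x =>
      mem_closedBall_zero_iff.2 (Circle.norm_coe _).le
  let G' : AddCircle T → Circle := fun x =>
    ⟨G (toCircle x), mem_sphere_zero_iff_norm.2 (hG1 _ (Circle.norm_coe _))⟩
  let g : AddCircle T → AddCircle T := (homeomorphCircle hT).symm ∘ G'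
  have hg : Measurable g :=
    ((homeomorphCircle hT).symm.continuous.comp (hcont.subtype_mk _)).measurable
  have toCircle_g (x : AddCircle T) : (toCircle (g x) : ℂ) = G (toCircle x) :=
    congrArg Subtype.val <| (homeomorphCircle_apply hT (g x)).symm.trans
      ((homeomorphCircle hT).apply_symm_apply (G' x))
  have map_g : haarAddCircle.map g = haarAddCircle := by
    refine measure_ext_of_integral_toCircle_pow fun n => ?_
    rw [integral_map hg.aemeasurable (by fun_prop)]
    simp only [toCircle_g, integral_comp_toCircle_pow_of_diffContOnCl hG, hG0]
    exact (integral_comp_toCircle_pow_of_diffContOnCl differentiable_id.diffContOnCl n).symm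
  refine ⟨hcont.measurable, ?_⟩
  conv_rhs => rw [← map_g, Measure.map_map (by fun_prop) hg]
  simp only [Function.comp_def, toCircle_g]

theorem lintegral_mul_toCircle_eq_norm_mul (f : ℂ → ℝ≥0∞) (z : ℂ) :
    ∫⁻ x : AddCircle T, f (z * toCircle x) ∂haarAddCircle =
      ∫⁻ x : AddCircle T, f (‖z‖ * toCircle x) ∂haarAddCircle := by
  obtain ⟨c, hc, hcz⟩ := Complex.exists_norm_mul_eq_self z
  have hT : T ≠ 0 := (Fact.out : 0 < T).ne'
  obtain ⟨y, hy⟩ := (homeomorphCircle hT).surjective ⟨c, mem_sphere_zero_iff_norm.2 hc⟩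
  have toCircle_y : (toCircle y : ℂ) = c :=
    congrArg Subtype.val ((homeomorphCircle_apply hT y).symm.trans hy)
  rw [← lintegral_add_left_eq_self (fun x : AddCircle T => f (‖z‖ * toCircle x)) y]
  refine lintegral_congr fun x => ?_
  rw [toCircle_add, Circle.coe_mul, toCircle_y, ← mul_assoc, mul_comm _ c, hcz]

theorem measurePreserving_ofReal_mul_toCircle (μ : Measure ℂ) [SFinite μ]
    [SMulInvariantMeasure Circle ℂ μ] :
    MeasurePreserving (fun p : ℝ × AddCircle T => (p.1 : ℂ) * toCircle p.2)
      ((μ.map norm).prod haarAddCircle) μ := by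
  have hmeas : Measurable fun p : ℝ × AddCircle T => (p.1 : ℂ) * toCircle p.2 := by
    fun_prop
  refine ⟨hmeas, Measure.ext_of_lintegral _ fun f hf => ?_⟩
  calc ∫⁻ z, f z ∂((μ.map norm).prod haarAddCircle).map _
      = ∫⁻ z, ∫⁻ x : AddCircle T, f (‖z‖ * toCircle x) ∂haarAddCircle ∂μ := by
        have hf' : Measurable fun p : ℝ × AddCircle T => f (p.1 * toCircle p.2) := hf.comp hmeas
        rw [lintegral_map hf hmeas, lintegral_prod _ hf'.aemeasurable,
          lintegral_map hf'.lintegral_prod_right' measurable_norm]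
    _ = ∫⁻ x : AddCircle T, ∫⁻ z, f (toCircle x • z) ∂μ ∂haarAddCircle := by
        simp_rw [← lintegral_mul_toCircle_eq_norm_mul, Circle.smul_def, smul_eq_mul,
          mul_comm _ (_ : ℂ)]
        exact lintegral_lintegral_swap (by fun_prop)
    _ = ∫⁻ z, f z ∂μ := by
        simp [fun u : Circle => (measurePreserving_smul u μ).lintegral_comp hf]

end UniformAngle

theorem map_eq_map_of_forall_ofReal_mul {E : Type*} [MeasurableSpace E] {μ : Measure ℂ}
    [SFinite μ] [SMulInvariantMeasure Circle ℂ μ] {G : ℂ → ℂ} (hG : DiffContOnCl ℂ G (ball 0 1))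
    (hG1 : ∀ z, ‖z‖ = 1 → ‖G z‖ = 1) (hG0 : G 0 = 0) {V : ℂ → E} (hV : Measurable V)
    {Ψ : ℝ × ℂ → E} (hΨ : Measurable Ψ) (hVΨ : ∀ (r : ℝ) u, ‖u‖ = 1 → V (r * u) = Ψ (r, G u)) :
    μ.map V =
      ((μ.map norm).prod (haarAddCircle.map fun x : UnitAddCircle => (toCircle x : ℂ))).map Ψ := by
  have polar := measurePreserving_ofReal_mul_toCircle (T := 1) μ
  have angle := (MeasurePreserving.id (μ.map norm)).prod
    (measurePreserving_comp_toCircle_of_diffContOnCl (T := 1) hG hG1 hG0)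
  rw [← angle.map_eq, Measure.map_map hΨ angle.measurable]
  conv_lhs => rw [← polar.map_eq, Measure.map_map hV polar.measurable]
  congr 1
  ext p
  exact hVΨ p.1 _ (Circle.norm_coe _)

instance smulInvariantMeasure_circle_stdGaussian :
    SMulInvariantMeasure Circle ℂ (ProbabilityTheory.stdGaussian ℂ) where
  measure_preimage_smul u s hs := by
    conv_rhs => rw [← ProbabilityTheory.stdGaussian_map (rotation u)]
    rw [Measure.map_apply (by fun_prop) hs]
    rfl

theorem map_repr_stdGaussian {ι E : Type*} [Fintype ι] [NormedAddCommGroup E]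
    [InnerProductSpace ℝ E] [FiniteDimensional ℝ E] [MeasurableSpace E] [BorelSpace E]
    (b : OrthonormalBasis ι ℝ E) :
    (ProbabilityTheory.stdGaussian E).map (fun v i => b.repr v i) = stdGaussian ι := by
  rw [stdGaussian_eq_map_pi_orthonormalBasis b, Measure.map_map (by fun_prop) (by fun_prop)]
  convert! Measure.map_id
  ext x i
  classical
  simp [OrthonormalBasis.repr_self, Pi.single_apply]

theorem map_re_im_stdGaussian :
    (ProbabilityTheory.stdGaussian ℂ).map (fun ζ => ![ζ.re, ζ.im]) = stdGaussian (Fin 2) := by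
  simpa [Complex.orthonormalBasisOneI_repr_apply] using
    map_repr_stdGaussian Complex.orthonormalBasisOneI

/-- The degree two Blaschke product with zeros `0` and `-conj a`. -/
def blaschke (a z : ℂ) : ℂ :=
  z * (z + conj a) / (1 + a * z)

section Blaschke

variable {a : ℂ}

theorem one_add_mul_ne_zero_of_norm_lt_one (ha : ‖a‖ < 1) {z : ℂ} (hz : ‖z‖ ≤ 1) :
    1 + a * z ≠ 0 := by
  intro h
  have : ‖a * z‖ = 1 := by rw [eq_neg_of_add_eq_zero_right h, norm_neg, norm_one]
  rw [norm_mul] at this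
  nlinarith [norm_nonneg a]

theorem diffContOnCl_blaschke (ha : ‖a‖ < 1) : DiffContOnCl ℂ (blaschke a) (ball 0 1) := by
  refine DifferentiableOn.diffContOnCl fun z hz => ?_
  have hz : ‖z‖ ≤ 1 := mem_closedBall_zero_iff.1 (closure_ball_subset_closedBall hz)
  unfold blaschke
  exact DifferentiableAt.differentiableWithinAt
    (.div (by fun_prop) (by fun_prop) (one_add_mul_ne_zero_of_norm_lt_one ha hz))

theorem norm_blaschke_of_norm_eq_one (ha : ‖a‖ < 1) {z : ℂ} (hz : ‖z‖ = 1) :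
    ‖blaschke a z‖ = 1 := by
  have hnum : z * (z + conj a) = z ^ 2 * conj (1 + a * z) := by
    have := Complex.mul_conj' z
    simp only [hz, map_add, map_one, map_mul, Complex.ofReal_one] at this ⊢
    linear_combination -z * conj a * this
  rw [blaschke, hnum, norm_div, norm_mul, norm_pow, hz, RCLike.norm_conj, one_pow, one_mul,
    div_self (norm_ne_zero_iff.2 (one_add_mul_ne_zero_of_norm_lt_one ha hz.le))]

end Blaschke

theorem sq_one_add_re_div_normSq_one_add {t : ℂ} (ht : 1 + t ≠ 0) :
    (1 + t.re) ^ 2 / Complex.normSq (1 + t) =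
      1 - (Complex.normSq t - (t * (t + Complex.normSq t) / (1 + t)).re) / 2 := by
  have hn : Complex.normSq (1 + t) ≠ 0 := Complex.normSq_eq_zero.not.2 ht
  have hnum : t * (t + Complex.normSq t) / (1 + t) =
      (t * conj (1 + t)) ^ 2 / (Complex.normSq (1 + t) : ℝ) := by
    rw [← Complex.mul_conj (1 + t), ← Complex.mul_conj t]
    have : conj (1 + t) ≠ 0 := (map_ne_zero _).2 ht
    field_simp
    simp
  rw [hnum, Complex.div_ofReal_re]
  field_simp
  simp only [pow_two, Complex.normSq_apply, Complex.add_re, Complex.one_re, Complex.add_im,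
    Complex.one_im, zero_add, map_add, map_one, Complex.mul_re, Complex.conj_re, Complex.conj_im,
    Complex.mul_im]
  ring

theorem sq_one_add_re_div_normSq_eq_blaschke {ρ : ℝ} (hρ : |ρ| < 1) {s : ℂ} (hs : ‖s‖ = 1) :
    (1 + (ρ * s).re) ^ 2 / Complex.normSq (1 + ρ * s) =
      1 - ρ ^ 2 * (1 - (blaschke ρ s).re) / 2 := by
  have hρ' : ‖(ρ : ℂ)‖ < 1 := by simpa using hρ
  have hnorm : Complex.normSq (ρ * s) = ρ ^ 2 := by simp [Complex.normSq_eq_norm_sq, hs]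
  have hratio : ρ * s * (ρ * s + (ρ ^ 2 : ℝ)) / (1 + ρ * s) = (ρ ^ 2 : ℝ) * blaschke ρ s := by
    rw [blaschke, Complex.conj_ofReal]
    push_cast
    ring
  rw [sq_one_add_re_div_normSq_one_add (one_add_mul_ne_zero_of_norm_lt_one hρ' hs.le), hnorm,
    hratio, Complex.re_ofReal_mul]
  ring

/-- The polynomial of the quadratic form `xᵀ A x`. -/
def quadraticPoly {ι R : Type*} [Fintype ι] [CommSemiring R] (A : Matrix ι ι R) :
    MvPolynomial ι R :=
  ∑ i, ∑ j, C (A i j) * X i * X j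

/-- The Wald ratio `waldRV` of the quadratic form `zᵀ M z` of a symmetric matrix `M`, with
identity covariance; the gradient of the form is `2 M z`. -/
def quadraticWald {ι : Type*} [Fintype ι] (M : Matrix ι ι ℝ) (z : ι → ℝ) : ℝ :=
  (z ⬝ᵥ M *ᵥ z) ^ 2 / (4 * (M *ᵥ z ⬝ᵥ M *ᵥ z))

section QuadraticForm

variable {ι : Type*} [Fintype ι]

theorem eval_quadraticPoly {R : Type*} [CommSemiring R] (A : Matrix ι ι R) (x : ι → R) :
    eval x (quadraticPoly A) = x ⬝ᵥ A *ᵥ x := by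
  simp only [quadraticPoly, map_sum, map_mul, eval_C, eval_X, dotProduct, mulVec, Finset.mul_sum]
  exact Finset.sum_congr rfl fun i _ => Finset.sum_congr rfl fun j _ => by ring

theorem pderiv_quadraticPoly {R : Type*} [CommSemiring R] (A : Matrix ι ι R) (k : ι) :
    pderiv k (quadraticPoly A) = ∑ i, C (A k i + A i k) * X i := by
  classical
  simp [quadraticPoly, pderiv_X, Pi.single_apply, Finset.sum_add_distrib, mul_add, mul_comm]

theorem polyGrad_quadraticPoly {A : Matrix ι ι ℝ} (hA : A.IsSymm) (x : ι → ℝ) :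
    polyGrad (quadraticPoly A) x = (2 : ℝ) • A *ᵥ x := by
  ext k
  simp [polyGrad, pderiv_quadraticPoly, hA.apply, mulVec, dotProduct, Finset.mul_sum, ← two_mul,
    mul_assoc]

theorem measurable_waldRV (f : MvPolynomial ι ℝ) (S : Matrix ι ι ℝ) : Measurable (waldRV f S) := by
  have hgrad : Continuous (polyGrad f) := continuous_pi fun i => MvPolynomial.continuous_eval _
  exact ((MvPolynomial.continuous_eval f).pow 2).measurable.div
    (hgrad.dotProduct (continuous_const.matrix_mulVec hgrad)).measurable

theorem waldRV_quadraticPoly_mulVec {A : Matrix ι ι ℝ} (hA : A.IsSymm) (B : Matrix ι ι ℝ)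
    (z : ι → ℝ) :
    waldRV (quadraticPoly A) (B * Bᵀ) (B *ᵥ z) = quadraticWald (Bᵀ * A * B) z := by
  set g := A *ᵥ B *ᵥ z with hg
  have hMz : (Bᵀ * A * B) *ᵥ z = Bᵀ *ᵥ g := by simp only [hg, mulVec_mulVec, Matrix.mul_assoc]
  have hform : B *ᵥ z ⬝ᵥ g = z ⬝ᵥ Bᵀ *ᵥ g := by rw [dotProduct_transpose_mulVec, dotProduct_comm]
  have hgrad : ((2 : ℝ) • g) ⬝ᵥ (B * Bᵀ) *ᵥ ((2 : ℝ) • g) = 4 * (Bᵀ *ᵥ g ⬝ᵥ Bᵀ *ᵥ g) := by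
    rw [← mulVec_mulVec, dotProduct_mulVec, ← mulVec_transpose]
    simp only [mulVec_smul, smul_dotProduct, dotProduct_smul, smul_eq_mul, ← mul_assoc]
    norm_num
  rw [waldRV, quadraticWald, eval_quadraticPoly, polyGrad_quadraticPoly hA, hMz, hform, hgrad]

theorem quadraticWald_smul (M : Matrix ι ι ℝ) (r : ℝ) (z : ι → ℝ) :
    quadraticWald M (r • z) = r ^ 2 * quadraticWald M z := by
  obtain rfl | hr := eq_or_ne r 0
  · simp [quadraticWald]
  · simp only [quadraticWald, mulVec_smul, smul_dotProduct, dotProduct_smul, smul_eq_mul]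
    field_simp

theorem quadraticWald_smul_matrix {p : ℝ} (hp : p ≠ 0) (M : Matrix ι ι ℝ) :
    quadraticWald (p • M) = quadraticWald M := by
  ext z
  simp only [quadraticWald, smul_mulVec, smul_dotProduct, dotProduct_smul, smul_eq_mul]
  field_simp

theorem measurable_quadraticWald (M : Matrix ι ι ℝ) : Measurable (quadraticWald M) := by
  unfold quadraticWald
  fun_prop

end QuadraticForm

/-- The real symmetric matrix which, under `ℂ = ℝ²`, acts as `ζ ↦ ζ + conj (κ * ζ)`, so that
`conj κ` is its Beltrami coefficient. -/
def beltramiMatrix (κ : ℂ) : Matrix (Fin 2) (Fin 2) ℝ :=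
  !![1 + κ.re, -κ.im; -κ.im, 1 - κ.re]

theorem det_beltramiMatrix (κ : ℂ) : (beltramiMatrix κ).det = 1 - ‖κ‖ ^ 2 := by
  rw [beltramiMatrix, det_fin_two_of, Complex.sq_norm, Complex.normSq_apply]
  ring

theorem exists_eq_smul_beltramiMatrix {M : Matrix (Fin 2) (Fin 2) ℝ} (hM : M.IsSymm)
    (htr : M.trace ≠ 0) : ∃ κ, M = (M.trace / 2) • beltramiMatrix κ := by
  refine ⟨⟨(M 0 0 - M 1 1) / M.trace, -(2 * M 0 1) / M.trace⟩, ?_⟩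
  have h10 : M 1 0 = M 0 1 := hM.apply 0 1
  have htrace : M.trace = M 0 0 + M 1 1 := trace_fin_two M
  ext i j
  fin_cases i <;> fin_cases j <;> simp [beltramiMatrix] <;> grind

theorem beltramiMatrix_mulVec (κ u : ℂ) :
    beltramiMatrix κ *ᵥ ![u.re, u.im] = ![(u + conj (κ * u)).re, (u + conj (κ * u)).im] := by
  ext i
  fin_cases i <;> simp [beltramiMatrix] <;> ring

theorem quadraticWald_beltramiMatrix (κ : ℂ) {u : ℂ} (hu : ‖u‖ = 1) :
    quadraticWald (beltramiMatrix κ) ![u.re, u.im] =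
      1 / 4 * ((1 + (κ * u ^ 2).re) ^ 2 / Complex.normSq (1 + κ * u ^ 2)) := by
  set w := u + conj (κ * u) with hw
  have huw : u * conj w = 1 + κ * u ^ 2 := by
    rw [hw, map_add, mul_add, Complex.mul_conj', hu, Complex.conj_conj]
    push_cast
    ring
  have hform : u.re * w.re + u.im * w.im = 1 + (κ * u ^ 2).re := by
    simpa using congrArg Complex.re huw
  have hgrad : w.re * w.re + w.im * w.im = Complex.normSq (1 + κ * u ^ 2) := by
    rw [← huw, map_mul, Complex.normSq_conj, Complex.normSq_eq_norm_sq u, hu, one_pow, one_mul,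
      Complex.normSq_apply]
  rw [quadraticWald, beltramiMatrix_mulVec, vec2_dotProduct', vec2_dotProduct', hform, hgrad]
  ring

/-- The function of a radius `r` and a point `w` of the unit circle, `p = (r, w)`, to which both
the Wald ratio of `beltramiMatrix κ`, `‖κ‖ = ρ`, and `(x² + (1 - ρ²) y²) / 4` reduce; they differ
only in how `w` depends on the direction of the vector. -/
def polarWald (ρ : ℝ) (p : ℝ × ℂ) : ℝ :=
  p.1 ^ 2 / 4 * (1 - ρ ^ 2 * (1 - p.2.re) / 2)

theorem quadraticWald_beltramiMatrix_ofReal_mul {κ c : ℂ} (hκ : ‖κ‖ < 1) (hc : ‖c‖ = 1)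
    (hcκ : c * ‖κ‖ = κ) (r : ℝ) {u : ℂ} (hu : ‖u‖ = 1) :
    quadraticWald (beltramiMatrix κ) ![(r * u).re, (r * u).im] =
      polarWald ‖κ‖ (r, blaschke ‖κ‖ (c * u ^ 2)) := by
  have hvec : ![(r * u).re, (r * u).im] = r • ![u.re, u.im] := by simp
  have hκu : κ * u ^ 2 = ‖κ‖ * (c * u ^ 2) := by rw [← mul_assoc, mul_comm _ c, hcκ]
  rw [hvec, quadraticWald_smul, quadraticWald_beltramiMatrix κ hu, hκu,
    sq_one_add_re_div_normSq_eq_blaschke (by simpa) (by simp [hc, hu]), polarWald]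
  ring

theorem sq_re_add_sq_im_ofReal_mul (ρ r : ℝ) {u : ℂ} (hu : ‖u‖ = 1) :
    1 / 4 * ((r * u).re ^ 2 + (1 - ρ ^ 2) * (r * u).im ^ 2) = polarWald ρ (r, u ^ 2) := by
  have : u.re ^ 2 + u.im ^ 2 = 1 := by
    rw [← one_pow 2, ← hu, Complex.sq_norm, Complex.normSq_apply, pow_two, pow_two]
  rw [polarWald, Complex.re_ofReal_mul, Complex.im_ofReal_mul, pow_two u, Complex.mul_re]
  linear_combination r ^ 2 * (1 / 4 - ρ ^ 2 / 8) * this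

theorem map_quadraticWald_beltramiMatrix {κ : ℂ} (hκ : ‖κ‖ < 1) :
    (stdGaussian (Fin 2)).map (quadraticWald (beltramiMatrix κ)) =
      (stdGaussian (Fin 2)).map
        fun z => 1 / 4 * (z 0 ^ 2 + (1 - ‖κ‖ ^ 2) * z 1 ^ 2) := by
  obtain ⟨c, hc, hcκ⟩ := Complex.exists_norm_mul_eq_self κ
  have hκ' : ‖(‖κ‖ : ℂ)‖ < 1 := by simpa
  have hvec : Measurable fun ζ : ℂ => ![ζ.re, ζ.im] := by fun_prop
  have hpolar : Measurable (polarWald ‖κ‖) := by unfold polarWald; fun_prop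
  have hblaschke : DiffContOnCl ℂ (fun z => blaschke ‖κ‖ (c * z ^ 2)) (ball 0 1) := by
    have hsq : Differentiable ℂ fun z : ℂ => c * z ^ 2 := by fun_prop
    refine (diffContOnCl_blaschke hκ').comp hsq.diffContOnCl fun z hz => ?_
    rw [mem_ball_zero_iff] at hz ⊢
    simpa [hc] using hz
  rw [← map_re_im_stdGaussian, Measure.map_map (measurable_quadraticWald _) hvec,
    Measure.map_map (by fun_prop) hvec]
  refine (map_eq_map_of_forall_ofReal_mul hblaschke ?_ (by simp [blaschke])
    ((measurable_quadraticWald _).comp hvec) hpolar fun r u hu =>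
      quadraticWald_beltramiMatrix_ofReal_mul hκ hc hcκ r hu).trans
    (map_eq_map_of_forall_ofReal_mul (differentiable_pow 2).diffContOnCl (by simp +contextual)
      (by simp) (by fun_prop) hpolar fun r u hu => sq_re_add_sq_im_ofReal_mul ‖κ‖ r hu).symm
  exact fun z hz => norm_blaschke_of_norm_eq_one hκ' (by simp [hc, hz])

theorem trace_ne_zero_of_isSymm_of_det_pos {M : Matrix (Fin 2) (Fin 2) ℝ} (hM : M.IsSymm)
    (hdet : 0 < M.det) : M.trace ≠ 0 := by
  rw [det_fin_two, hM.apply 0 1] at hdet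
  rw [trace_fin_two]
  intro h
  rw [eq_neg_of_add_eq_zero_right h] at hdet
  nlinarith [sq_nonneg (M 0 0), sq_nonneg (M 0 1)]

theorem map_quadraticWald {M : Matrix (Fin 2) (Fin 2) ℝ} (hM : M.IsSymm) (hdet : 0 < M.det) :
    (stdGaussian (Fin 2)).map (quadraticWald M) =
      (stdGaussian (Fin 2)).map
        fun z => 1 / 4 * (z 0 ^ 2 + 4 * M.det / M.trace ^ 2 * z 1 ^ 2) := by
  have htr : M.trace ≠ 0 := trace_ne_zero_of_isSymm_of_det_pos hM hdet
  obtain ⟨κ, hκM⟩ := exists_eq_smul_beltramiMatrix hM htr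
  have hdet_eq : M.det = (M.trace / 2) ^ 2 * (1 - ‖κ‖ ^ 2) := by
    conv_lhs => rw [hκM, det_smul, det_beltramiMatrix, Fintype.card_fin]
  have hκ : ‖κ‖ < 1 := by
    have := pos_of_mul_pos_right (hdet_eq ▸ hdet) (sq_nonneg _)
    nlinarith [norm_nonneg κ]
  have hcoeff : 4 * M.det / M.trace ^ 2 = 1 - ‖κ‖ ^ 2 := by
    rw [hdet_eq]
    field_simp
    ring
  have hwald : quadraticWald M = quadraticWald (beltramiMatrix κ) := by
    rw [hκM, quadraticWald_smul_matrix (div_ne_zero htr two_ne_zero)]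
  rw [hcoeff, hwald, map_quadraticWald_beltramiMatrix hκ]

theorem quadraticPoly_fin_two (a b c : ℝ) :
    quadraticPoly !![a, b; b, c] = C a * X 0 ^ 2 + C (2 * b) * X 0 * X 1 + C c * X 1 ^ 2 := by
  simp only [quadraticPoly, Fin.sum_univ_two, of_apply, cons_val_zero, cons_val_one, two_mul,
    map_add]
  ring

/-- Let `Σ` be positive definite `2×2` and
`f(x₁,x₂) = a x₁² + 2b x₁x₂ + c x₂²` a nonzero quadratic form with matrix
`A = !![a, b; b, c] ≠ 0`.  If `b² − ac < 0`, then `W_{f,Σ}` has the same distribution as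
`(1/4)(Z₁² + (4 det(AΣ)/trace(AΣ)²) Z₂²)` for independent standard normals `Z₁, Z₂`. -/
theorem bivariate_quadratic_neg_disc (a b c : ℝ)
    (hA0 : !![a, b; b, c] ≠ (0 : Matrix (Fin 2) (Fin 2) ℝ))
    (hdisc : b ^ 2 - a * c < 0)
    (S : Matrix (Fin 2) (Fin 2) ℝ) (hS : S.PosDef)
    (μ : Measure (Fin 2 → ℝ)) (hμ : IsCenteredGaussian μ S) :
    μ.map (waldRV (C a * X 0 ^ 2 + C (2 * b) * X 0 * X 1 + C c * X 1 ^ 2) S) =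
      (stdGaussian (Fin 2)).map
        (fun z => 1 / 4 * (z 0 ^ 2 +
          4 * (!![a, b; b, c] * S).det / (!![a, b; b, c] * S).trace ^ 2 * z 1 ^ 2)) := by
  obtain ⟨B, rfl, rfl⟩ := hμ
  set A := !![a, b; b, c] with hA
  have hAsymm : A.IsSymm := IsSymm.ext fun i j => by fin_cases i <;> fin_cases j <;> rfl
  have hMsymm : (Bᵀ * A * B).IsSymm := by simp [IsSymm, hAsymm.eq, Matrix.mul_assoc]
  have hdet : (Bᵀ * A * B).det = (A * (B * Bᵀ)).det := by simp only [det_mul]; ring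
  have htrace : (Bᵀ * A * B).trace = (A * (B * Bᵀ)).trace := by
    rw [Matrix.mul_assoc, trace_mul_comm, Matrix.mul_assoc]
  have hpos : 0 < (A * (B * Bᵀ)).det := by
    rw [det_mul, hA, det_fin_two_of]
    exact mul_pos (by linarith) hS.det_pos
  rw [← quadraticPoly_fin_two, Measure.map_map (measurable_waldRV _ _) (by fun_prop), ← hdet,
    ← htrace, ← map_quadraticWald hMsymm (hdet ▸ hpos)]
  exact congrArg (Measure.map · _) (funext (waldRV_quadraticPoly_mulVec hAsymm B))
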